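/- arXiv:2212.00418 — 2 statements merged into one kernel-verified Lean document; each statement's English description precedes it below -/
import Mathlib

section
/- Let G be a finite simple graph, let X ⊆ V(G), let η ≥ 1, and let F be a treedepth decomposition of G − X of depth at most η. Let Z ⊆ V(G) ∖ X be upward closed in F, i.e., Z contains every F-ancestor of each of its elements. Then for every connected component C of G − (X ∪ Z), every vertex of N_G(C) ∩ Z is an F-ancestor of every vertex of C; in particular, |N_G(C) ∩ Z| ≤ η. -/
open SimpleGraph Set

variable {V : Type*}

/-- The connected component of `x` inside the induced subgraph `G[S]`, as a subset of `V`. -/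
def compIn (G : SimpleGraph V) (S : Set V) (x : V) : Set V :=
  {y | ∃ (hx : x ∈ S) (hy : y ∈ S), (G.induce S).Reachable ⟨x, hx⟩ ⟨y, hy⟩}

/-- `tdLE G n S` means that the treedepth of the induced subgraph `G[S]` is at most `n`,
following the recursive definition of treedepth: a graph has treedepth at most `n+1`
iff from every connected component one can delete a vertex leaving a graph of
treedepth at most `n`; only the empty graph has treedepth at most `0`. -/
def tdLE (G : SimpleGraph V) : ℕ → Set V → Prop
  | 0, S => S = ∅
  | n+1, S => ∀ x ∈ S, ∃ v ∈ compIn G S x, tdLE G n (compIn G S x \ {v})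

/-- The treedepth of the induced subgraph `G[S]`. -/
noncomputable def td (G : SimpleGraph V) (S : Set V) : ℕ :=
  sInf {n | tdLE G n S}

/-- `N_G(C)`: the set of vertices outside `C` having a neighbor in `C`. -/
def nbhd (G : SimpleGraph V) (C : Set V) : Set V :=
  {v | v ∉ C ∧ ∃ u ∈ C, G.Adj u v}

/-- `C` is a connected component of the induced subgraph `G[R]`. -/
def IsCompOf (G : SimpleGraph V) (R C : Set V) : Prop :=
  ∃ x ∈ R, C = compIn G R x

/-- `S` is an `η`-treedepth deletion set of `G`: `td(G − S) ≤ η`. -/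
def IsTDS (G : SimpleGraph V) (η : ℕ) (S : Set V) : Prop :=
  td G Sᶜ ≤ η

/-- `S` is a connected `η`-treedepth deletion set of `G`. -/
def IsCTDS (G : SimpleGraph V) (η : ℕ) (S : Set V) : Prop :=
  IsTDS G η S ∧ S.Nonempty ∧ (G.induce S).Connected

/-- A rooted forest with vertex set `A ⊆ V`, given by its (reflexive) ancestor relation:
`anc u v` means `u` is an ancestor of `v` (every vertex being an ancestor of itself). -/
structure RootedForest (V : Type*) (A : Set V) where
  anc : V → V → Prop
  mem_left : ∀ {u v}, anc u v → u ∈ A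
  mem_right : ∀ {u v}, anc u v → v ∈ A
  refl : ∀ v ∈ A, anc v v
  trans : ∀ {u v w}, anc u v → anc v w → anc u w
  antisymm : ∀ {u v}, anc u v → anc v u → u = v
  chain : ∀ {u w v}, anc u v → anc w v → anc u w ∨ anc w u

/-- Depth of a rooted forest: the maximum number of vertices on a root-to-leaf path,
i.e. the maximum number of ancestors of a vertex. -/
noncomputable def RootedForest.depth [Fintype V] {A : Set V} (F : RootedForest V A) : ℕ :=
  Finset.univ.sup fun v : V => {u | F.anc u v}.ncard

/-- `F` is a treedepth decomposition of `G[A]`: the endpoints of every edge of `G[A]`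
are in ancestor-descendant relation in `F`. -/
def IsTDDecompOn (G : SimpleGraph V) (A : Set V) (F : RootedForest V A) : Prop :=
  ∀ u v, u ∈ A → v ∈ A → G.Adj u v → F.anc u v ∨ F.anc v u

/-- `A` is an `(x,y)`-vertex cut in `G`: `A` avoids `x` and `y` and there is
no path from `x` to `y` in `G − A`. -/
def IsVertexCut (G : SimpleGraph V) (x y : V) (A : Set V) : Prop :=
  ∃ (hx : x ∈ Aᶜ) (hy : y ∈ Aᶜ), ¬ (G.induce Aᶜ).Reachable ⟨x, hx⟩ ⟨y, hy⟩

/-- The weight of a subgraph: the sum of the weights of its edges. -/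
noncomputable def subWeight (w : Sym2 V → ℕ) {G : SimpleGraph V} (T : G.Subgraph) : ℕ :=
  ∑ᶠ e ∈ T.edgeSet, w e

/-- The leaves (vertices with exactly one neighbor) of a subgraph. -/
def subLeaves {G : SimpleGraph V} (T : G.Subgraph) : Set V :=
  {v | (T.neighborSet v).ncard = 1}

/-- `T` is a Steiner tree for the terminal set `R` in `G`. -/
def IsSteinerTree (G : SimpleGraph V) (R : Set V) (T : G.Subgraph) : Prop :=
  T.coe.IsTree ∧ R ⊆ T.verts

/-- `T` is a `t`-component for `R`: a tree with at most `t` leaves, all of which lie in `R`. -/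
def IsTComponent (G : SimpleGraph V) (R : Set V) (t : ℕ) (T : G.Subgraph) : Prop :=
  T.coe.IsTree ∧ (subLeaves T).ncard ≤ t ∧ subLeaves T ⊆ R

/-!
For `v ∈ Z`, the `F`-descendants of `v` are closed under passing to a neighbor outside `Z`: if `a`
lies below `v` and `b ∉ Z` is adjacent to `a`, then either `b` lies below `a`, hence below `v`, or
`b` and `v` are both ancestors of `a`, hence comparable, and `b` cannot lie above `v` because `Z`
is upward closed. If `v` has a neighbor in `C`, this closure property leads from `v` itself to that
neighbor and then through all of `C`. Hence `N_G(C) ∩ Z` consists of ancestors of any single vertex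
of `C`.
-/

namespace RootedForest

variable {A : Set V}

/-- A set of vertices is upward closed in a rooted forest if it contains every ancestor of each of
its elements. -/
def IsUpwardClosed (F : RootedForest V A) (Z : Set V) : Prop :=
  ∀ z ∈ Z, ∀ u, F.anc u z → u ∈ Z

theorem encard_ancestors_le_depth [Fintype V] (F : RootedForest V A) (v : V) :
    {u | F.anc u v}.encard ≤ F.depth := by
  rw [← (toFinite {u | F.anc u v}).cast_ncard_eq, Nat.cast_le]
  exact Finset.le_sup (f := fun v : V => {u | F.anc u v}.ncard) (Finset.mem_univ v)

end RootedForest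

namespace IsCompOf

variable {G : SimpleGraph V} {S C : Set V}

theorem nonempty (hC : IsCompOf G S C) : C.Nonempty := by
  obtain ⟨x, hx, rfl⟩ := hC
  exact ⟨x, hx, hx, Reachable.rfl⟩

theorem subset (hC : IsCompOf G S C) : C ⊆ S := by
  obtain ⟨x, -, rfl⟩ := hC
  exact fun _ ⟨_, hy, _⟩ => hy

theorem mem_compIn (hC : IsCompOf G S C) {y z : V} (hy : y ∈ C) (hz : z ∈ C) :
    z ∈ compIn G S y := by
  obtain ⟨x, -, rfl⟩ := hC
  obtain ⟨_, hyS, hxy⟩ := hy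
  obtain ⟨_, hzS, hxz⟩ := hz
  exact ⟨hyS, hzS, hxy.symm.trans hxz⟩

end IsCompOf

namespace IsTDDecompOn

variable {G : SimpleGraph V} {A Z C : Set V} {F : RootedForest V A} {v : V}

theorem anc_of_adj (hF : IsTDDecompOn G A F) (hZ : F.IsUpwardClosed Z) (hv : v ∈ Z)
    {a b : V} (hva : F.anc v a) (hab : G.Adj a b) (hb : b ∈ A \ Z) : F.anc v b := by
  rcases hF a b (F.mem_right hva) hb.1 hab with h_below | h_above
  · exact F.trans hva h_below
  · exact (F.chain hva h_above).resolve_right fun hbv => hb.2 (hZ v hv b hbv)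

theorem anc_of_reachable (hF : IsTDDecompOn G A F) (hZ : F.IsUpwardClosed Z) (hv : v ∈ Z)
    {a b : ↥(A \ Z)} (hab : (G.induce (A \ Z)).Reachable a b) (hva : F.anc v a) :
    F.anc v b := by
  obtain ⟨p⟩ := hab
  induction p with
  | nil => exact hva
  | cons hadj _ ih => exact ih (hF.anc_of_adj hZ hv hva hadj (Subtype.prop _))

theorem anc_of_mem_nbhd (hF : IsTDDecompOn G A F) (hZA : Z ⊆ A) (hZ : F.IsUpwardClosed Z)
    (hC : IsCompOf G (A \ Z) C) {c : V} (hv : v ∈ nbhd G C ∩ Z) (hc : c ∈ C) : F.anc v c := by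
  obtain ⟨⟨-, u, huC, huv⟩, hvZ⟩ := hv
  have hvu : F.anc v u :=
    hF.anc_of_adj hZ hvZ (F.refl v (hZA hvZ)) huv.symm (hC.subset huC)
  obtain ⟨_, _, huc⟩ := hC.mem_compIn huC hc
  exact hF.anc_of_reachable hZ hvZ huc hvu

end IsTDDecompOn

theorem stmt2_general (G : SimpleGraph V) (X : Set V) (η : ℕ∞) (F : RootedForest V Xᶜ)
    (hF : IsTDDecompOn G Xᶜ F) (hdepth : ∀ v, {u | F.anc u v}.encard ≤ η)
    (Z : Set V) (hZX : Z ⊆ Xᶜ) (hup : F.IsUpwardClosed Z) (C : Set V)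
    (hC : IsCompOf G (X ∪ Z)ᶜ C) :
    (∀ v ∈ nbhd G C ∩ Z, ∀ c ∈ C, F.anc v c) ∧ (nbhd G C ∩ Z).encard ≤ η := by
  rw [compl_union, ← sdiff_eq] at hC
  have h_anc : ∀ v ∈ nbhd G C ∩ Z, ∀ c ∈ C, F.anc v c :=
    fun _ hv _ hc => hF.anc_of_mem_nbhd hZX hup hC hv hc
  obtain ⟨x, hx⟩ := hC.nonempty
  exact ⟨h_anc, (encard_le_encard fun v hv => h_anc v hv x hx).trans (hdepth x)⟩

/-- if `F` is a treedepth decomposition of `G − X` of depth at most `η`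
and `Z ⊆ V(G) ∖ X` is upward closed in `F`, then for every connected component `C` of
`G − (X ∪ Z)`, every vertex of `N_G(C) ∩ Z` is an `F`-ancestor of every vertex of `C`;
in particular `|N_G(C) ∩ Z| ≤ η`. -/
theorem stmt2 {V : Type*} [Fintype V] (G : SimpleGraph V) (X : Set V)
    (η : ℕ) (hη : 1 ≤ η)
    (F : RootedForest V Xᶜ) (hF : IsTDDecompOn G Xᶜ F) (hdepth : F.depth ≤ η)
    (Z : Set V) (hZX : Z ⊆ Xᶜ) (hup : ∀ z ∈ Z, ∀ u, F.anc u z → u ∈ Z) :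
    ∀ C, IsCompOf G (X ∪ Z)ᶜ C →
      (∀ v ∈ nbhd G C ∩ Z, ∀ c ∈ C, F.anc v c) ∧ (nbhd G C ∩ Z).ncard ≤ η := by
  have h_encard : ∀ v, {u | F.anc u v}.encard ≤ η := fun v =>
    (F.encard_ancestors_le_depth v).trans (Nat.cast_le.2 hdepth)
  exact fun C hC =>
    (stmt2_general G X η F hF h_encard Z hZX hup C hC).imp_right ENat.toNat_le_of_le_natCast
end

section
/- Let F be a treedepth decomposition of a finite simple graph G, and let u and v be distinct vertices of G such that neither is an ancestor of the other in F. Then u and v are non-adjacent in G, and the set A of common ancestors of u and v in F is a (u,v)-vertex cut in G. -/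
open SimpleGraph Set

variable {V : Type*}

theorem isVertexCut_iff_forall_walk {G : SimpleGraph V} {x y : V} {A : Set V} :
    IsVertexCut G x y A ↔ x ∉ A ∧ y ∉ A ∧ ∀ p : G.Walk x y, ∃ w ∈ p.support, w ∈ A := by
  constructor
  · rintro ⟨hx, hy, hxy⟩
    refine ⟨hx, hy, fun p => ?_⟩
    by_contra! hp
    exact hxy ⟨p.induce Aᶜ hp⟩
  · rintro ⟨hx, hy, hA⟩
    refine ⟨hx, hy, fun ⟨p⟩ => ?_⟩
    have avoids : ∀ w ∈ (p.map (Embedding.induce Aᶜ).toHom).support, w ∉ A := by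
      rw [Walk.support_map, List.forall_mem_map]
      exact fun z _ => z.2
    obtain ⟨w, hwp, hwA⟩ := hA (p.map (Embedding.induce Aᶜ).toHom)
    exact avoids w hwp hwA

namespace IsTDDecompOn

variable {G : SimpleGraph V} {A : Set V} {F : RootedForest V A}

theorem exists_mem_support_forall_anc (hF : IsTDDecompOn G A F) {u v : V} (p : G.Walk u v)
    (hp : ∀ x ∈ p.support, x ∈ A) : ∃ w ∈ p.support, ∀ x ∈ p.support, F.anc w x := by
  induction p with
  | @nil u => exact ⟨u, by simp, by simpa using F.refl u (by simpa using hp)⟩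
  | @cons u t v hadj q ih =>
    simp only [Walk.support_cons, List.forall_mem_cons] at hp
    obtain ⟨hu, hq⟩ := hp
    obtain ⟨w, hwq, hw⟩ := ih hq
    have hwt : F.anc w t := hw t q.start_mem_support
    have huw : F.anc u w ∨ F.anc w u := by
      rcases hF u t hu (hq t q.start_mem_support) hadj with hut | htu
      · exact F.chain hut hwt
      · exact .inr (F.trans hwt htu)
    simp only [Walk.support_cons, List.forall_mem_cons]
    rcases huw with huw | hwu
    · exact ⟨u, List.mem_cons_self, F.refl u hu, fun x hx => F.trans huw (hw x hx)⟩
    · exact ⟨w, List.mem_cons_of_mem u hwq, hwu, hw⟩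

theorem not_adj (hF : IsTDDecompOn G A F) {u v : V} (hu : u ∈ A) (hv : v ∈ A)
    (huv : ¬ F.anc u v) (hvu : ¬ F.anc v u) : ¬ G.Adj u v :=
  fun hadj => (hF u v hu hv hadj).elim huv hvu

-- Deleting `Aᶜ` turns `G` into `G[A]`, the graph that `F` decomposes.
theorem isVertexCut_compl_union (hF : IsTDDecompOn G A F) {u v : V} (hu : u ∈ A) (hv : v ∈ A)
    (huv : ¬ F.anc u v) (hvu : ¬ F.anc v u) :
    IsVertexCut G u v (Aᶜ ∪ {w | F.anc w u ∧ F.anc w v}) := by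
  refine isVertexCut_iff_forall_walk.2
    ⟨fun h => h.elim (· hu) (huv ·.2), fun h => h.elim (· hv) (hvu ·.1), fun p => ?_⟩
  by_cases hp : ∀ x ∈ p.support, x ∈ A
  · obtain ⟨w, hwp, hw⟩ := hF.exists_mem_support_forall_anc p hp
    exact ⟨w, hwp, .inr ⟨hw u p.start_mem_support, hw v p.end_mem_support⟩⟩
  · push Not at hp
    obtain ⟨x, hxp, hxA⟩ := hp
    exact ⟨x, hxp, .inl hxA⟩

end IsTDDecompOn

theorem stmt3_general {G : SimpleGraph V} {A : Set V} {F : RootedForest V A}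
    (hF : IsTDDecompOn G A F) {u v : V} (hu : u ∈ A) (hv : v ∈ A)
    (huv : ¬ F.anc u v) (hvu : ¬ F.anc v u) :
    ¬ G.Adj u v ∧ IsVertexCut G u v (Aᶜ ∪ {w | F.anc w u ∧ F.anc w v}) :=
  ⟨hF.not_adj hu hv huv hvu, hF.isVertexCut_compl_union hu hv huv hvu⟩

/-- if `F` is a treedepth decomposition of `G` and `u ≠ v` are such
that neither is an ancestor of the other in `F`, then `u` and `v` are non-adjacent
and the set of their common ancestors is a `(u,v)`-vertex cut in `G`. -/
theorem stmt3 {V : Type*} [Fintype V] (G : SimpleGraph V)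
    (F : RootedForest V Set.univ) (hF : IsTDDecompOn G Set.univ F)
    (u v : V) (huv : u ≠ v) (h1 : ¬ F.anc u v) (h2 : ¬ F.anc v u) :
    ¬ G.Adj u v ∧ IsVertexCut G u v {w | F.anc w u ∧ F.anc w v} := by
  simpa only [compl_univ, empty_union] using stmt3_general hF (mem_univ u) (mem_univ v) h1 h2
end
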